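/- Let τ ∈ R(T). Then for every g ∈ H the Fredholm partial integral equation of the second kind f − τ(T₁+T₂)f = g has a unique solution f ∈ H. -/

import Mathlib

open MeasureTheory Complex

noncomputable section

/-- The measure on `ℝ` given by restricting Lebesgue measure to `[a,b]`. -/
abbrev muI (a b : ℝ) : MeasureTheory.Measure ℝ :=
  MeasureTheory.volume.restrict (Set.Icc a b)

theorem aux_swap (μ ν : Measure ℝ) [IsFiniteMeasure μ] [IsFiniteMeasure ν]
    {q : ℝ × ℝ → Prop} (hq : ∀ᵐ z ∂(μ.prod ν), q z) : ∀ᵐ y ∂ν, ∀ᵐ x ∂μ, q (x, y) := by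
  have h1 : ∀ᵐ z ∂(ν.prod μ), q z.swap :=
    (Measure.measurePreserving_swap (μ := ν) (ν := μ)).quasiMeasurePreserving.ae hq
  exact Measure.ae_ae_of_ae_prod h1

theorem aux_tens (μ ν : Measure ℝ) [IsFiniteMeasure μ] [IsFiniteMeasure ν] {u v : ℝ → ℂ}
    (hu : MemLp u 2 μ) (hv : MemLp v 2 ν) :
    MemLp (fun z : ℝ × ℝ => u z.1 * v z.2) 2 (μ.prod ν) := by
  have hm : AEStronglyMeasurable (fun z : ℝ × ℝ => u z.1 * v z.2) (μ.prod ν) :=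
    hu.1.comp_fst.mul hv.1.comp_snd
  rw [memLp_two_iff_integrable_sq_norm hm]
  have h1 := (memLp_two_iff_integrable_sq_norm hu.1).1 hu
  have h2 := (memLp_two_iff_integrable_sq_norm hv.1).1 hv
  refine (h1.mul_prod h2).congr (Filter.Eventually.of_forall fun z => ?_)
  simp [mul_pow]

theorem aux_int (μ ν : Measure ℝ) [IsFiniteMeasure μ] [IsFiniteMeasure ν] {u v : ℝ → ℂ}
    (hu : MemLp u 2 μ) (hv : MemLp v 2 ν) {F : ℝ × ℝ → ℂ} (hF : MemLp F 2 (μ.prod ν)) :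
    Integrable (fun z : ℝ × ℝ => star (u z.1) * (star (v z.2) * F z)) (μ.prod ν) := by
  have h1 : MemLp (fun z : ℝ × ℝ => star (u z.1) * star (v z.2)) 2 (μ.prod ν) :=
    aux_tens μ ν hu.star hv.star
  refine (h1.integrable_mul hF).congr (Filter.Eventually.of_forall fun z => ?_)
  simp [mul_assoc]

theorem aux_A (μ ν : Measure ℝ) [IsFiniteMeasure μ] [IsFiniteMeasure ν] {n : ℕ}
    (φ : Fin n → ℝ → ℂ) (hφ : ∀ k, MemLp (φ k) 2 μ) (h : Fin n → ℝ → ℝ)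
    {F : ℝ × ℝ → ℂ} (hF : MemLp F 2 (μ.prod ν)) :
    ∀ᵐ z ∂(μ.prod ν),
      ∫ s, (∑ k, φ k z.1 * star (φ k s) * (h k z.2 : ℂ)) * F (s, z.2) ∂μ =
      ∑ k, φ k z.1 * (h k z.2 * ∫ s, star (φ k s) * F (s, z.2) ∂μ) := by
  have h1 : ∀ᵐ y ∂ν, ∀ k, Integrable (fun s => star (φ k s) * F (s, y)) μ := by
    rw [ae_all_iff]
    intro k
    have := (aux_int μ ν (hφ k) (memLp_const (1 : ℂ)) hF).prod_left_ae
    simpa using this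
  filter_upwards [Measure.quasiMeasurePreserving_snd.ae h1] with z hz
  simp_rw [Finset.sum_mul]
  rw [integral_finsetSum]
  · refine Finset.sum_congr rfl fun k _ => ?_
    rw [← mul_assoc, ← integral_const_mul]
    congr 1; ext s; ring
  · intro k _
    refine ((hz k).const_mul (φ k z.1 * h k z.2)).congr (Filter.Eventually.of_forall fun s => ?_)
    ring

theorem aux_A2 (μ ν : Measure ℝ) [IsFiniteMeasure μ] [IsFiniteMeasure ν] {m : ℕ}
    (ψ : Fin m → ℝ → ℂ) (hψ : ∀ k, MemLp (ψ k) 2 ν) (p : Fin m → ℝ → ℝ)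
    {F : ℝ × ℝ → ℂ} (hF : MemLp F 2 (μ.prod ν)) :
    ∀ᵐ z ∂(μ.prod ν),
      ∫ t, (∑ j, (p j z.1 : ℂ) * ψ j z.2 * star (ψ j t)) * F (z.1, t) ∂ν =
      ∑ j, ψ j z.2 * (p j z.1 * ∫ t, star (ψ j t) * F (z.1, t) ∂ν) := by
  have h1 : ∀ᵐ x ∂μ, ∀ k, Integrable (fun t => star (ψ k t) * F (x, t)) ν := by
    rw [ae_all_iff]
    intro k
    have := (aux_int μ ν (memLp_const (1 : ℂ)) (hψ k) hF).prod_right_ae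
    simpa using this
  filter_upwards [Measure.quasiMeasurePreserving_fst.ae h1] with z hz
  simp_rw [Finset.sum_mul]
  rw [integral_finsetSum]
  · refine Finset.sum_congr rfl fun k _ => ?_
    rw [← mul_assoc, ← integral_const_mul]
    congr 1; ext s; ring
  · intro k _
    refine ((hz k).const_mul (ψ k z.2 * p k z.1)).congr (Filter.Eventually.of_forall fun s => ?_)
    ring

theorem aux_B (μ ν : Measure ℝ) [IsFiniteMeasure μ] [IsFiniteMeasure ν] {n : ℕ}
    (φ : Fin n → ℝ → ℂ) (hφ : ∀ k, MemLp (φ k) 2 μ)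
    (hON : ∀ i j, ∫ x, star (φ i x) * φ j x ∂μ = if i = j then 1 else 0)
    {F : ℝ × ℝ → ℂ} (w : Fin n → ℝ → ℂ)
    (hF : ∀ᵐ z ∂(μ.prod ν), F z = ∑ l, φ l z.1 * w l z.2) :
    ∀ᵐ z ∂(μ.prod ν), ∀ k, ∫ s, star (φ k s) * F (s, z.2) ∂μ = w k z.2 := by
  have h1 := aux_swap μ ν hF
  have h2 : ∀ᵐ y ∂ν, ∀ k, ∫ s, star (φ k s) * F (s, y) ∂μ = w k y := by
    filter_upwards [h1] with y hy k
    have e : ∫ s, star (φ k s) * F (s, y) ∂μ =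
        ∫ s, ∑ l, (star (φ k s) * φ l s) * w l y ∂μ := by
      apply integral_congr_ae
      filter_upwards [hy] with s hs
      rw [hs, Finset.mul_sum]
      refine Finset.sum_congr rfl fun l _ => ?_
      ring
    rw [e, integral_finsetSum]
    · simp_rw [integral_mul_const, hON]
      simp
    · intro l _
      exact ((hφ k).star.integrable_mul (hφ l)).mul_const _
  exact Measure.quasiMeasurePreserving_snd.ae h2

/-- `φ_l ⊗ h_l ψ_j` coefficients of `T₁ T₂`. -/
theorem aux_C (μ ν : Measure ℝ) [IsFiniteMeasure μ] [IsFiniteMeasure ν] {n m : ℕ}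
    (φ : Fin n → ℝ → ℂ) (hφ : ∀ k, MemLp (φ k) 2 μ)
    (ψ : Fin m → ℝ → ℂ) (hψ : ∀ k, MemLp (ψ k) 2 ν)
    (p : Fin m → ℝ → ℝ) (hpmeas : ∀ j, Measurable (p j))
    (hpbdd : ∀ j, ∃ C : ℝ, ∀ᵐ x ∂μ, |p j x| ≤ C)
    {F : ℝ × ℝ → ℂ} (hF : MemLp F 2 (μ.prod ν)) {G : ℝ × ℝ → ℂ}
    (hG : ∀ᵐ z ∂(μ.prod ν), G z = ∑ j, ψ j z.2 * (p j z.1 * ∫ t, star (ψ j t) * F (z.1, t) ∂ν)) :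
    ∃ K : Fin n → Fin m → ℂ, ∀ᵐ z ∂(μ.prod ν), ∀ l,
      ∫ s, star (φ l s) * G (s, z.2) ∂μ = ∑ j, K l j * ψ j z.2 := by
  refine ⟨fun l j => ∫ s, star (φ l s) * (p j s * ∫ t, star (ψ j t) * F (s, t) ∂ν) ∂μ, ?_⟩
  have hI : ∀ l j, Integrable
      (fun s => star (φ l s) * (p j s * ∫ t, star (ψ j t) * F (s, t) ∂ν)) μ := by
    intro l j
    have h1 := (aux_int μ ν (hφ l) (hψ j) hF).integral_prod_left
    obtain ⟨C, hC⟩ := hpbdd j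
    have h2 := h1.bdd_mul (f := fun s => (p j s : ℂ)) (c := C)
      (Complex.measurable_ofReal.comp (hpmeas j)).aestronglyMeasurable
      (by simpa using hC)
    refine h2.congr (Filter.Eventually.of_forall fun s => ?_)
    simp only [integral_const_mul]
    ring
  have h1 := aux_swap μ ν hG
  suffices h2 : ∀ᵐ y ∂ν, ∀ l, ∫ s, star (φ l s) * G (s, y) ∂μ =
      ∑ j, (∫ s, star (φ l s) * (p j s * ∫ t, star (ψ j t) * F (s, t) ∂ν) ∂μ) * ψ j y from
    Measure.quasiMeasurePreserving_snd.ae h2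
  filter_upwards [h1] with y hy l
  rw [integral_congr_ae (g := fun s => ∑ j,
    (star (φ l s) * (p j s * ∫ t, star (ψ j t) * F (s, t) ∂ν)) * ψ j y)]
  · rw [integral_finsetSum]
    · simp_rw [integral_mul_const]
    · intro j _
      exact (hI l j).mul_const _
  · filter_upwards [hy] with s hs
    rw [hs, Finset.mul_sum]
    refine Finset.sum_congr rfl fun j _ => ?_
    ring

/-- Fredholm alternative for a finite rank operator. -/
theorem aux_fred {H : Type*} [AddCommGroup H] [Module ℂ H] (F : H →ₗ[ℂ] H)
    (hfin : FiniteDimensional ℂ (LinearMap.range F)) (hinj : ∀ g, F g = g → g = 0) (g : H) :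
    ∃ f, f - F f = g := by
  let K := LinearMap.range F
  let L : K →ₗ[ℂ] K := LinearMap.id - (F.rangeRestrict.comp K.subtype)
  have hL : ∀ u : K, ((L u : K) : H) = u - F u := fun u => rfl
  have hLi : Function.Injective L := by
    rw [← LinearMap.ker_eq_bot, LinearMap.ker_eq_bot']
    intro u hu
    have := hL u
    rw [hu] at this
    have h2 := hinj u (sub_eq_zero.1 this.symm).symm
    exact Subtype.ext h2
  obtain ⟨u, hu⟩ := (LinearMap.injective_iff_surjective.1 hLi) ⟨F g, g, rfl⟩
  refine ⟨g + u, ?_⟩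
  have := hL u
  rw [hu] at this
  have e : (F g : H) = u - F u := this
  rw [map_add, e]; abel

theorem statement10
    (a b c d : ℝ) (hab : a < b) (hcd : c < d)
    (n : ℕ) (hn : 1 ≤ n)
    (φ : Fin n → ℝ → ℂ)
    (hφL2 : ∀ k, MemLp (φ k) 2 (muI a b))
    (hφON : ∀ i j, ∫ x, star (φ i x) * φ j x ∂(muI a b) = if i = j then 1 else 0)
    (h : Fin n → ℝ → ℝ)
    (hhmeas : ∀ k, Measurable (h k))
    (hhbdd : ∀ k, ∃ C : ℝ, ∀ᵐ y ∂(muI c d), |h k y| ≤ C)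
    (m : ℕ) (hm : 1 ≤ m)
    (ψ : Fin m → ℝ → ℂ)
    (hψL2 : ∀ j, MemLp (ψ j) 2 (muI c d))
    (hψON : ∀ i j, ∫ y, star (ψ i y) * ψ j y ∂(muI c d) = if i = j then 1 else 0)
    (p : Fin m → ℝ → ℝ)
    (hpmeas : ∀ j, Measurable (p j))
    (hpbdd : ∀ j, ∃ C : ℝ, ∀ᵐ x ∂(muI a b), |p j x| ≤ C)
    (T1 T2 : Lp ℂ 2 ((muI a b).prod (muI c d)) →L[ℂ] Lp ℂ 2 ((muI a b).prod (muI c d)))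
    (hT1sa : IsSelfAdjoint T1) (hT2sa : IsSelfAdjoint T2)
    (hT1 : ∀ f : Lp ℂ 2 ((muI a b).prod (muI c d)),
      ∀ᵐ z ∂((muI a b).prod (muI c d)),
        T1 f z = ∫ s, (∑ k, φ k z.1 * star (φ k s) * (h k z.2 : ℂ)) * f (s, z.2) ∂(muI a b))
    (hT2 : ∀ f : Lp ℂ 2 ((muI a b).prod (muI c d)),
      ∀ᵐ z ∂((muI a b).prod (muI c d)),
        T2 f z = ∫ t, (∑ j, (p j z.1 : ℂ) * ψ j z.2 * star (ψ j t)) * f (z.1, t) ∂(muI c d))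
    -- the orthogonal projections `P k`
    (P : Fin n → (Lp ℂ 2 ((muI a b).prod (muI c d)) →L[ℂ] Lp ℂ 2 ((muI a b).prod (muI c d))))
    (hP : ∀ k, ∀ f : Lp ℂ 2 ((muI a b).prod (muI c d)),
      ∀ᵐ z ∂((muI a b).prod (muI c d)),
        P k f z = φ k z.1 * ∫ s, star (φ k s) * f (s, z.2) ∂(muI a b))
    -- the operators S₁(τ)
    (S1 : ℂ → (Lp ℂ 2 ((muI a b).prod (muI c d)) →L[ℂ] Lp ℂ 2 ((muI a b).prod (muI c d))))
    (hS1 : ∀ τ : ℂ, τ ≠ 0 → τ⁻¹ ∈ resolventSet ℂ T1 → τ⁻¹ ∈ resolventSet ℂ T2 →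
      ∀ f : Lp ℂ 2 ((muI a b).prod (muI c d)),
        ∀ᵐ z ∂((muI a b).prod (muI c d)),
          S1 τ f z = ∑ k, ((h k z.2 : ℂ) / (1 - τ * (h k z.2 : ℂ))) * P k f z)
    -- the operators W₁(τ) = (E-τT₂)⁻¹ S₁(τ) T₂
    (W1 : ℂ → (Lp ℂ 2 ((muI a b).prod (muI c d)) →L[ℂ] Lp ℂ 2 ((muI a b).prod (muI c d))))
    (hW1 : ∀ τ : ℂ, τ ≠ 0 → τ⁻¹ ∈ resolventSet ℂ T1 → τ⁻¹ ∈ resolventSet ℂ T2 →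
      (1 - τ • T2) * W1 τ = S1 τ * T2)
    -- the sets D(T) and R(T)
    (DT RT : Set ℂ)
    (hDT : DT = {τ : ℂ | τ ≠ 0 ∧ τ⁻¹ ∈ resolventSet ℂ T1 ∧ τ⁻¹ ∈ resolventSet ℂ T2 ∧
      ∃ g : Lp ℂ 2 ((muI a b).prod (muI c d)), g ≠ 0 ∧ (τ ^ 2 • W1 τ) g = g})
    (hRT : RT = {τ : ℂ | τ ≠ 0 ∧ τ⁻¹ ∈ resolventSet ℂ T1 ∧ τ⁻¹ ∈ resolventSet ℂ T2 ∧
      ¬ ∃ g : Lp ℂ 2 ((muI a b).prod (muI c d)), g ≠ 0 ∧ (τ ^ 2 • W1 τ) g = g}) :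
    ∀ τ ∈ RT, ∀ g : Lp ℂ 2 ((muI a b).prod (muI c d)),
      ∃! f : Lp ℂ 2 ((muI a b).prod (muI c d)), f - τ • (T1 + T2) f = g := by
  intro τ hτ g
  rw [hRT] at hτ
  obtain ⟨hτ0, hr1, hr2, hne⟩ := hτ
  have unitOf : ∀ T : Lp ℂ 2 ((muI a b).prod (muI c d)) →L[ℂ] Lp ℂ 2 ((muI a b).prod (muI c d)),
      τ⁻¹ ∈ resolventSet ℂ T → IsUnit (1 - τ • T) := by
    intro T hT
    rw [spectrum.mem_resolventSet_iff] at hT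
    have : (1 - τ • T) = (Units.mk0 τ hτ0) • (algebraMap ℂ _ τ⁻¹ - T) := by
      rw [Units.smul_def, Units.val_mk0, smul_sub, Algebra.algebraMap_eq_smul_one, smul_smul,
        mul_inv_cancel₀ hτ0, one_smul]
    rw [this]
    exact hT.smul _
  have hA := unitOf T1 hr1
  have hB := unitOf T2 hr2
  have hinj1 : ∀ f, τ • T1 f = f → f = 0 := by
    intro f hf
    obtain ⟨u, hu⟩ := hA
    have h1 : (1 - τ • T1) f = 0 := by simp [hf]
    have h2 : ((u⁻¹).val * u.val) f = 0 := by
      rw [mul_apply_eq_comp, hu, h1, map_zero]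
    simpa using h2
  -- formulas
  have fT1 : ∀ f : Lp ℂ 2 ((muI a b).prod (muI c d)), ∀ᵐ z ∂((muI a b).prod (muI c d)),
      T1 f z = ∑ k, φ k z.1 * (h k z.2 * ∫ s, star (φ k s) * f (s, z.2) ∂(muI a b)) := by
    intro f
    filter_upwards [hT1 f, aux_A (muI a b) (muI c d) φ hφL2 h (Lp.memLp f)] with z h1 h2
    rw [h1, h2]
  have fT1w : ∀ (f : Lp ℂ 2 ((muI a b).prod (muI c d))) (w : Fin n → ℝ → ℂ),
      (∀ᵐ z ∂((muI a b).prod (muI c d)), f z = ∑ l, φ l z.1 * w l z.2) →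
      ∀ᵐ z ∂((muI a b).prod (muI c d)), T1 f z = ∑ l, φ l z.1 * (h l z.2 * w l z.2) := by
    intro f w hw
    filter_upwards [fT1 f, aux_B (muI a b) (muI c d) φ hφL2 hφON w hw] with z h1 h2
    simp only [h1, h2]
  have fS1 : ∀ f : Lp ℂ 2 ((muI a b).prod (muI c d)), ∀ᵐ z ∂((muI a b).prod (muI c d)),
      S1 τ f z = ∑ k, φ k z.1 * (((h k z.2 : ℂ) / (1 - τ * (h k z.2 : ℂ))) *
        ∫ s, star (φ k s) * f (s, z.2) ∂(muI a b)) := by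
    intro f
    filter_upwards [hS1 τ hτ0 hr1 hr2 f, ae_all_iff.2 fun k => hP k f] with z h1 h2
    rw [h1]
    refine Finset.sum_congr rfl fun k _ => ?_
    rw [h2 k]; ring
  have key : ∀ f, S1 τ f - τ • T1 (S1 τ f) = T1 f := by
    intro f
    rw [← sub_eq_zero]
    set G := S1 τ f - τ • T1 (S1 τ f) - T1 f with hGdef
    let w : Fin n → ℝ → ℂ := fun l y => if 1 - τ * (h l y : ℂ) = 0 then
      -((h l y : ℂ) * ∫ s, star (φ l s) * f (s, y) ∂(muI a b)) else 0
    have hGw : ∀ᵐ z ∂((muI a b).prod (muI c d)), G z = ∑ l, φ l z.1 * w l z.2 := by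
      have hs := fT1w (S1 τ f) (fun k y => ((h k y : ℂ) / (1 - τ * (h k y : ℂ))) *
        ∫ s, star (φ k s) * f (s, y) ∂(muI a b)) (fS1 f)
      filter_upwards [Lp.coeFn_sub (S1 τ f - τ • T1 (S1 τ f)) (T1 f),
        Lp.coeFn_sub (S1 τ f) (τ • T1 (S1 τ f)), Lp.coeFn_smul τ (T1 (S1 τ f)),
        fS1 f, fT1 f, hs] with z h1 h2 h3 h4 h5 h6
      rw [hGdef, h1, Pi.sub_apply, h2, Pi.sub_apply, h3, Pi.smul_apply, h4, h5, h6, smul_eq_mul,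
        Finset.mul_sum, ← Finset.sum_sub_distrib, ← Finset.sum_sub_distrib]
      refine Finset.sum_congr rfl fun l _ => ?_
      simp only [w]
      split_ifs with hc
      · rw [hc]; simp
      · generalize (∫ s, star (φ l s) * f (s, z.2) ∂(muI a b)) = I
        have hc2 : (h l z.2 : ℂ) / (1 - τ * (h l z.2 : ℂ)) * (1 - τ * (h l z.2 : ℂ)) =
          h l z.2 := div_mul_cancel₀ _ hc
        linear_combination (φ l z.1 * I) * hc2
    apply hinj1
    apply Lp.ext
    filter_upwards [Lp.coeFn_smul τ (T1 G), fT1w G w hGw, hGw] with z h1 h2 h3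
    rw [h1, Pi.smul_apply, h2, h3, smul_eq_mul, Finset.mul_sum]
    refine Finset.sum_congr rfl fun l _ => ?_
    simp only [w]
    split_ifs with hc
    · have : τ * (h l z.2 : ℂ) = 1 := (sub_eq_zero.1 hc).symm
      linear_combination
        (-φ l z.1 * (h l z.2 * ∫ s, star (φ l s) * f (s, z.2) ∂(muI a b))) * this
    · simp
  -- finite rank
  have hu : ∀ l j, MemLp (fun z : ℝ × ℝ => φ l z.1 * ((h l z.2 : ℂ) * ψ j z.2)) 2
      ((muI a b).prod (muI c d)) := by
    intro l j
    refine aux_tens (muI a b) (muI c d) (hφL2 l) (v := fun y => (h l y : ℂ) * ψ j y) ?_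
    obtain ⟨C, hC⟩ := hhbdd l
    have : MemLp (fun y => (h l y : ℂ)) ⊤ (muI c d) :=
      memLp_top_of_bound (Complex.measurable_ofReal.comp (hhmeas l)).aestronglyMeasurable C
        (by simpa using hC)
    exact (hψL2 j).mul' this
  have hfr : ∀ f, T1 (T2 f) ∈ Submodule.span ℂ
      (Set.range fun q : Fin n × Fin m => (hu q.1 q.2).toLp _) := by
    intro f
    have hT2f : ∀ᵐ z ∂((muI a b).prod (muI c d)), T2 f z =
        ∑ j, ψ j z.2 * (p j z.1 * ∫ t, star (ψ j t) * f (z.1, t) ∂(muI c d)) := by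
      filter_upwards [hT2 f, aux_A2 (muI a b) (muI c d) ψ hψL2 p (Lp.memLp f)] with z h1 h2
      rw [h1, h2]
    obtain ⟨K, hK⟩ := aux_C (muI a b) (muI c d) φ hφL2 ψ hψL2 p hpmeas hpbdd (Lp.memLp f) hT2f
    have : T1 (T2 f) = ∑ q : Fin n × Fin m, K q.1 q.2 • (hu q.1 q.2).toLp _ := by
      apply Lp.ext
      have h5 : ∀ᵐ z ∂((muI a b).prod (muI c d)), ∀ q : Fin n × Fin m,
          (K q.1 q.2 • (hu q.1 q.2).toLp _ : Lp ℂ 2 ((muI a b).prod (muI c d))) z =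
          K q.1 q.2 * (φ q.1 z.1 * ((h q.1 z.2 : ℂ) * ψ q.2 z.2)) := by
        rw [ae_all_iff]
        intro q
        filter_upwards [Lp.coeFn_smul (K q.1 q.2) ((hu q.1 q.2).toLp _),
          (hu q.1 q.2).coeFn_toLp] with z h1 h2
        rw [h1, Pi.smul_apply, h2, smul_eq_mul]
      have h6 : ∀ᵐ z ∂((muI a b).prod (muI c d)),
          (∑ q : Fin n × Fin m, K q.1 q.2 • (hu q.1 q.2).toLp _ :
            Lp ℂ 2 ((muI a b).prod (muI c d))) z = ∑ q : Fin n × Fin m,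
          (K q.1 q.2 • (hu q.1 q.2).toLp _ : Lp ℂ 2 ((muI a b).prod (muI c d))) z :=
        by
          filter_upwards [Lp.coeFn_finsetSum Finset.univ (fun q : Fin n × Fin m => (K q.1 q.2 • (hu q.1 q.2).toLp _ : Lp ℂ 2 ((muI a b).prod (muI c d))))] with z hz
          simpa using hz
      filter_upwards [fT1 (T2 f), hK, h5, h6] with z h1 h2 h3 h4
      rw [h1, h4, Fintype.sum_prod_type]
      refine Finset.sum_congr rfl fun l _ => ?_
      rw [h2 l, Finset.mul_sum, Finset.mul_sum]
      refine Finset.sum_congr rfl fun j _ => ?_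
      rw [h3 (l, j)]
      ring
    rw [this]
    exact Submodule.sum_mem _ fun q _ => Submodule.smul_mem _ _
      (Submodule.subset_span ⟨q, rfl⟩)
  -- factorization
  have hAS : (1 - τ • T1) * S1 τ = T1 := by
    ext1 f
    simpa using key f
  have hW := hW1 τ hτ0 hr1 hr2
  have hfac : 1 - τ • (T1 + T2) = (1 - τ • T1) * ((1 - τ • T2) * (1 - τ ^ 2 • W1 τ)) := by
    have e1 : (1 - τ • T2) * (1 - τ ^ 2 • W1 τ) = 1 - τ • T2 - τ ^ 2 • (S1 τ * T2) := by
      rw [mul_sub, mul_one, mul_smul_comm, hW]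
    rw [e1, mul_sub, mul_smul_comm, ← mul_assoc, hAS, mul_sub, mul_one, sub_mul, one_mul,
      smul_mul_assoc, mul_smul_comm, smul_smul, smul_add, pow_two]
    abel
  obtain ⟨uA, huA⟩ := hA
  obtain ⟨uB, huB⟩ := hB
  have hWf : W1 τ = ↑(uB⁻¹ * uA⁻¹) * (T1 * T2) := by
    rw [Units.val_mul, mul_assoc, Units.eq_inv_mul_iff_mul_eq, Units.eq_inv_mul_iff_mul_eq, huA,
      huB, hW, ← mul_assoc, hAS]
  let F : Lp ℂ 2 ((muI a b).prod (muI c d)) →ₗ[ℂ] Lp ℂ 2 ((muI a b).prod (muI c d)) :=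
    ((τ ^ 2 • W1 τ : Lp ℂ 2 ((muI a b).prod (muI c d)) →L[ℂ] _) : _ →ₗ[ℂ] _)
  have hF : ∀ f, F f = (τ ^ 2 • W1 τ) f := fun f => rfl
  have hFinj : ∀ f, F f = f → f = 0 := by
    intro f hf
    by_contra hcon
    exact hne ⟨f, hcon, hf⟩
  have hfin : FiniteDimensional ℂ (LinearMap.range F) := by
    let V := Submodule.span ℂ (Set.range fun q : Fin n × Fin m => (hu q.1 q.2).toLp _)
    have hV : FiniteDimensional ℂ V := FiniteDimensional.span_of_finite ℂ (Set.finite_range _)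
    let Q : Lp ℂ 2 ((muI a b).prod (muI c d)) →ₗ[ℂ] Lp ℂ 2 ((muI a b).prod (muI c d)) :=
      (uB⁻¹ * uA⁻¹).val.toLinearMap
    have hle : LinearMap.range F ≤ V.map Q := by
      rintro _ ⟨f, rfl⟩
      refine ⟨τ ^ 2 • T1 (T2 f), V.smul_mem _ (hfr f), ?_⟩
      rw [hF, hWf, map_smul]
      rfl
    exact Submodule.finiteDimensional_of_le hle
  have heq : ∀ f, f - τ • (T1 + T2) f = uA.val (uB.val (f - F f)) := by
    intro f
    have := congrArg (fun L => L f) hfac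
    rw [← huA, ← huB] at this
    exact this
  have hinvL : ∀ (u : (Lp ℂ 2 ((muI a b).prod (muI c d)) →L[ℂ]
      Lp ℂ 2 ((muI a b).prod (muI c d)))ˣ) x, (u⁻¹).val (u.val x) = x := by
    intro u x
    rw [← mul_apply_eq_comp, Units.inv_mul]; rfl
  have hinvR : ∀ (u : (Lp ℂ 2 ((muI a b).prod (muI c d)) →L[ℂ]
      Lp ℂ 2 ((muI a b).prod (muI c d)))ˣ) x, u.val ((u⁻¹).val x) = x := by
    intro u x
    rw [← mul_apply_eq_comp, Units.mul_inv]; rfl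
  obtain ⟨f, hf⟩ := aux_fred F hfin hFinj ((uB⁻¹).val ((uA⁻¹).val g))
  refine ⟨f, ?_, ?_⟩
  · change f - τ • (T1 + T2) f = g
    rw [heq, hf, hinvR, hinvR]
  · intro f2 hf2
    change f2 - τ • (T1 + T2) f2 = g at hf2
    rw [heq] at hf2
    have h1 : f2 - F f2 = f - F f := by
      rw [hf, ← hf2, hinvL, hinvL]
    have h2 := hFinj (f2 - f) (by
      rw [map_sub]
      have := sub_eq_zero.2 h1
      rw [← sub_eq_zero, ← neg_eq_zero, ← this]; abel)
    exact sub_eq_zero.1 h2
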